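/- Let λ ∈ (0,1) and K, κ > 0 with 2κKe ≤ 1, and set q = [ (1−λ)^{1−λ}/(1+λ)^{1+λ} ] (2κKe)^{2λ}. Then q ∈ (0,1) and there is a constant C > 0 such that for all integers p ≥ 1, with s = λ(p+1) (factorials interpreted via the Gamma function), (p+1−s)!/(p+1+s)! · ( K · 2κp )^{2s} ≤ C q^{p+1}. Consequently, if a function u on I = (0,1) satisfies |u|²_{s+1,I} ≤ C₁ K^{2s+1} M^{2s+1} with M ≤ 2κp, then (1/(2p+1)) · (p+1−s)!/(p+1+s)! · |u'|²_{s,I} ≤ C' e^{−βp} with β = |ln q|. -/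

import Mathlib

noncomputable section

open MeasureTheory Set

/-- A mesh `0 = x₀ < x₁ < ⋯ < x_N = 1` on the interval `I = (0,1)`. -/
structure Mesh (N : ℕ) where
  pt : Fin (N + 1) → ℝ
  mono : StrictMono pt
  left : pt 0 = 0
  right : pt (Fin.last N) = 1

namespace Mesh

variable {N : ℕ}

/-- The left endpoint `x_{j-1}` of the `j`-th cell `I_j`. -/
def xl (m : Mesh N) (j : Fin N) : ℝ := m.pt j.castSucc

/-- The right endpoint `x_j` of the `j`-th cell `I_j`. -/
def xr (m : Mesh N) (j : Fin N) : ℝ := m.pt j.succ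

/-- The width `h_j` of the `j`-th cell. -/
def width (m : Mesh N) (j : Fin N) : ℝ := m.xr j - m.xl j

end Mesh

/-- `f` coincides (everywhere) with a polynomial of degree at most `p`. -/
def IsPolyDeg (f : ℝ → ℝ) (p : ℕ) : Prop :=
  ∃ q : Polynomial ℝ, q.natDegree ≤ p ∧ ∀ t, f t = q.eval t

/-- `D` is the weak derivative of degree `p` of the weak function with interior part `v0`
and boundary values `vl`, `vr` on the cell `(a,b)`. -/
def IsWeakDerivOn (a b : ℝ) (p : ℕ) (v0 : ℝ → ℝ) (vl vr : ℝ) (D : ℝ → ℝ) : Prop :=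
  IsPolyDeg D p ∧ ∀ q : Polynomial ℝ, q.natDegree ≤ p →
    (∫ t in a..b, D t * q.eval t) =
      -(∫ t in a..b, v0 t * q.derivative.eval t) + vr * q.eval b - vl * q.eval a

/-- `D` is the (cellwise) weak derivative `D_p v` of the weak function `v = (v0, vb)`. -/
def IsWeakDeriv {N : ℕ} (m : Mesh N) (p : ℕ) (v0 : Fin N → ℝ → ℝ)
    (vb : Fin (N + 1) → ℝ) (D : Fin N → ℝ → ℝ) : Prop :=
  ∀ j, IsWeakDerivOn (m.xl j) (m.xr j) p (v0 j) (vb j.castSucc) (vb j.succ) (D j)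

/-- `D` is the weak convection derivative of degree `p` on the cell `(a,b)`,
with convection coefficient `bb`. -/
def IsWeakConvDerivOn (bb : ℝ → ℝ) (a b : ℝ) (p : ℕ) (v0 : ℝ → ℝ) (vl vr : ℝ)
    (D : ℝ → ℝ) : Prop :=
  IsPolyDeg D p ∧ ∀ q : Polynomial ℝ, q.natDegree ≤ p →
    (∫ t in a..b, D t * q.eval t) =
      -(∫ t in a..b, v0 t * deriv (fun s => bb s * q.eval s) t)
      + vr * (bb b * q.eval b) - vl * (bb a * q.eval a)

/-- `D` is the (cellwise) weak convection derivative `D_p^c v` of `v = (v0, vb)`. -/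
def IsWeakConvDeriv {N : ℕ} (m : Mesh N) (bb : ℝ → ℝ) (p : ℕ) (v0 : Fin N → ℝ → ℝ)
    (vb : Fin (N + 1) → ℝ) (D : Fin N → ℝ → ℝ) : Prop :=
  ∀ j, IsWeakConvDerivOn bb (m.xl j) (m.xr j) p (v0 j) (vb j.castSucc) (vb j.succ) (D j)

/-- The stabilisation bilinear form `S(u,v)`. -/
def Sform {N : ℕ} (m : Mesh N) (σ : Fin N → ℝ)
    (u0 : Fin N → ℝ → ℝ) (ub : Fin (N + 1) → ℝ)
    (v0 : Fin N → ℝ → ℝ) (vb : Fin (N + 1) → ℝ) : ℝ :=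
  ∑ j : Fin N, σ j * ((u0 j (m.xr j) - ub j.succ) * (v0 j (m.xr j) - vb j.succ)
    + (u0 j (m.xl j) - ub j.castSucc) * (v0 j (m.xl j) - vb j.castSucc))

/-- The convection stabilisation bilinear form `S_c(u,v)`. -/
def Scform {N : ℕ} (m : Mesh N) (ε₂ : ℝ) (bb : ℝ → ℝ)
    (u0 : Fin N → ℝ → ℝ) (ub : Fin (N + 1) → ℝ)
    (v0 : Fin N → ℝ → ℝ) (vb : Fin (N + 1) → ℝ) : ℝ :=
  ∑ j : Fin N, ε₂ * bb (m.xr j) * (u0 j (m.xr j) - ub j.succ) * (v0 j (m.xr j) - vb j.succ)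

/-- The squared jump seminorm `|v|_J²`. -/
def Jsemi2 {N : ℕ} (m : Mesh N) (ε₂ : ℝ) (bb : ℝ → ℝ)
    (v0 : Fin N → ℝ → ℝ) (vb : Fin (N + 1) → ℝ) : ℝ :=
  ∑ j : Fin N, (if j.succ = Fin.last N then (1 : ℝ) / 2 else 1) * ε₂ * bb (m.xr j) *
    (v0 j (m.xr j) - vb j.succ) ^ 2

/-- The squared WG energy norm `|||v|||_p²`, where `Dv` is the weak derivative `D_{p-1} v`. -/
def normP2 {N : ℕ} (m : Mesh N) (ε₁ ε₂ : ℝ) (bb : ℝ → ℝ) (σ : Fin N → ℝ)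
    (v0 : Fin N → ℝ → ℝ) (vb : Fin (N + 1) → ℝ) (Dv : Fin N → ℝ → ℝ) : ℝ :=
  ε₁ * (∑ j : Fin N, ∫ t in (m.xl j)..(m.xr j), (Dv j t) ^ 2)
    + (∑ j : Fin N, ∫ t in (m.xl j)..(m.xr j), (v0 j t) ^ 2)
    + Sform m σ v0 vb v0 vb + Scform m ε₂ bb v0 vb v0 vb + Jsemi2 m ε₂ bb v0 vb

/-- The squared WG norm `|||v|||²` (with the broken classical derivative). -/
def normT2 {N : ℕ} (m : Mesh N) (ε₁ ε₂ : ℝ) (bb : ℝ → ℝ) (σ : Fin N → ℝ)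
    (v0 : Fin N → ℝ → ℝ) (vb : Fin (N + 1) → ℝ) : ℝ :=
  ε₁ * (∑ j : Fin N, ∫ t in (m.xl j)..(m.xr j), (deriv (v0 j) t) ^ 2)
    + (∑ j : Fin N, ∫ t in (m.xl j)..(m.xr j), (v0 j t) ^ 2)
    + Sform m σ v0 vb v0 vb + Scform m ε₂ bb v0 vb v0 vb + Jsemi2 m ε₂ bb v0 vb

/-- The WG bilinear form `A_p(u,v)`; `Du = D_{p-1}u`, `Dcu = D_p^c u`, `Dv = D_{p-1}v`. -/
def Aform {N : ℕ} (m : Mesh N) (ε₁ ε₂ : ℝ) (bb rr : ℝ → ℝ) (σ : Fin N → ℝ)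
    (u0 : Fin N → ℝ → ℝ) (ub : Fin (N + 1) → ℝ) (Du Dcu : Fin N → ℝ → ℝ)
    (v0 : Fin N → ℝ → ℝ) (vb : Fin (N + 1) → ℝ) (Dv : Fin N → ℝ → ℝ) : ℝ :=
  ε₁ * (∑ j : Fin N, ∫ t in (m.xl j)..(m.xr j), Du j t * Dv j t)
    + ε₂ * (∑ j : Fin N, ∫ t in (m.xl j)..(m.xr j), Dcu j t * v0 j t)
    + (∑ j : Fin N, ∫ t in (m.xl j)..(m.xr j), rr t * u0 j t * v0 j t)
    + Sform m σ u0 ub v0 vb + Scform m ε₂ bb u0 ub v0 vb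

/-- `u` solves the two-parameter singularly perturbed boundary-value problem
`-ε₁ u'' + ε₂ b u' + r u = f` on `(0,1)`, `u(0) = u(1) = 0`. -/
def SolvesBVP (ε₁ ε₂ : ℝ) (bb rr ff u : ℝ → ℝ) : Prop :=
  u 0 = 0 ∧ u 1 = 0 ∧
    ∀ x ∈ Set.Icc (0 : ℝ) 1,
      -ε₁ * deriv (deriv u) x + ε₂ * bb x * deriv u x + rr x * u x = ff x

/-- `P` is the interpolant `I y` of `y` on the cell `(a,b)`. -/
def IsInterpOn (a b : ℝ) (p : ℕ) (y P : ℝ → ℝ) : Prop :=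
  IsPolyDeg P p ∧ P a = y a ∧ P b = y b ∧
    ∀ q : Polynomial ℝ, q.natDegree ≤ p →
      (∫ t in a..b, (deriv P t - deriv y t) * q.derivative.eval t) = 0

/-- `P` is the (cellwise) interpolant `I y` of `y` on the mesh `m`. -/
def IsInterp {N : ℕ} (m : Mesh N) (p : ℕ) (y : ℝ → ℝ) (P : Fin N → ℝ → ℝ) : Prop :=
  ∀ j, IsInterpOn (m.xl j) (m.xr j) p y (P j)

/-- Glue cellwise functions into a single function on `I` (cells taken left-closed). -/
def glue {N : ℕ} (m : Mesh N) (v0 : Fin N → ℝ → ℝ) : ℝ → ℝ :=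
  fun t => ∑ j : Fin N, Set.indicator (Set.Ico (m.xl j) (m.xr j)) (v0 j) t

/-- The standard penalty parameters `σ_j = ε₁ p² / h_j`. -/
def stdPen {N : ℕ} (m : Mesh N) (ε₁ : ℝ) (p : ℕ) : Fin N → ℝ :=
  fun j => ε₁ * (p : ℝ) ^ 2 / m.width j

/-- Membership of the interior part in the broken Sobolev space `H¹(ω)`. -/
def MemM {N : ℕ} (m : Mesh N) (v0 : Fin N → ℝ → ℝ) : Prop :=
  ∀ j, DifferentiableOn ℝ (v0 j) (Set.Icc (m.xl j) (m.xr j))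

/-- `(up0, upb)`, with weak derivatives `Du = D_{p-1} u_p` and `Dcu = D_p^c u_p`, is a
weak Galerkin solution of degree `p` on the mesh `m`. -/
def IsWGsol {N : ℕ} (m : Mesh N) (ε₁ ε₂ : ℝ) (bb rr ff : ℝ → ℝ) (p : ℕ)
    (up0 : Fin N → ℝ → ℝ) (upb : Fin (N + 1) → ℝ) (Du Dcu : Fin N → ℝ → ℝ) : Prop :=
  (∀ j, IsPolyDeg (up0 j) p) ∧ upb 0 = 0 ∧ upb (Fin.last N) = 0 ∧
    IsWeakDeriv m (p - 1) up0 upb Du ∧ IsWeakConvDeriv m bb p up0 upb Dcu ∧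
    ∀ (w0 : Fin N → ℝ → ℝ) (wb : Fin (N + 1) → ℝ),
      (∀ j, IsPolyDeg (w0 j) p) → wb 0 = 0 → wb (Fin.last N) = 0 →
      ∀ Dw : Fin N → ℝ → ℝ, IsWeakDeriv m (p - 1) w0 wb Dw →
        Aform m ε₁ ε₂ bb rr (stdPen m ε₁ p) up0 upb Du Dcu w0 wb Dw
          = ∑ j : Fin N, ∫ t in (m.xl j)..(m.xr j), ff t * w0 j t

/-- Broken `L²` norm over the mesh of a cellwise-given function. -/
def brokenL2 {N : ℕ} (m : Mesh N) (f : Fin N → ℝ → ℝ) : ℝ :=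
  Real.sqrt (∑ j : Fin N, ∫ t in (m.xl j)..(m.xr j), (f j t) ^ 2)

/-- `L²(a,b)` norm. -/
def intL2 (a b : ℝ) (f : ℝ → ℝ) : ℝ := Real.sqrt (∫ t in a..b, (f t) ^ 2)

/-- Analyticity of the data: `‖g⁽ⁿ⁾‖_{∞,[0,1]} ≲ n! γ_g^n`. -/
def AnalyticData (g : ℝ → ℝ) : Prop :=
  ContDiff ℝ (⊤ : ℕ∞) g ∧ ∃ C γg : ℝ, 0 < C ∧ 0 < γg ∧
    ∀ n : ℕ, ∀ x ∈ Set.Icc (0 : ℝ) 1, |iteratedDeriv n g x| ≤ C * n.factorial * γg ^ n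

/-- The characteristic values `μ₀` (`sgn = -1`) and `μ₁` (`sgn = 1`). -/
def muVal (sgn ε₁ ε₂ : ℝ) (bb rr : ℝ → ℝ) : ℝ :=
  sInf ((fun x => (sgn * ε₂ * bb x + Real.sqrt (ε₂ ^ 2 * (bb x) ^ 2 + 4 * ε₁ * rr x))
      / (2 * ε₁)) '' Set.Icc 0 1)

def mu0 (ε₁ ε₂ : ℝ) (bb rr : ℝ → ℝ) : ℝ := muVal (-1) ε₁ ε₂ bb rr

def mu1 (ε₁ ε₂ : ℝ) (bb rr : ℝ → ℝ) : ℝ := muVal 1 ε₁ ε₂ bb rr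

/-- The Spectral Boundary Layer mesh in the reaction-convection-diffusion regime. -/
def IsSBLmeshRCD {N : ℕ} (κ : ℝ) (p : ℕ) (ε₁ ε₂ : ℝ) (bb rr : ℝ → ℝ) (m : Mesh N) : Prop :=
  ((1 : ℝ) / 2 ≤ κ * p * ε₁ ∧ N = 1) ∨
    (κ * p * ε₂ < 1 / 2 ∧ N = 3 ∧
      m.pt 1 = κ * p / mu0 ε₁ ε₂ bb rr ∧ m.pt 2 = 1 - κ * p / mu1 ε₁ ε₂ bb rr)

/-- The Spectral Boundary Layer mesh in the reaction-diffusion regime. -/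
def IsSBLmeshRD {N : ℕ} (κ : ℝ) (p : ℕ) (ε₁ : ℝ) (m : Mesh N) : Prop :=
  ((1 : ℝ) / 2 ≤ κ * p * ε₁ ∧ N = 1) ∨
    (κ * p * ε₁ < 1 / 2 ∧ N = 3 ∧
      m.pt 1 = κ * p * Real.sqrt ε₁ ∧ m.pt 2 = 1 - κ * p * Real.sqrt ε₁)

/-- The Spectral Boundary Layer mesh in the convection-diffusion regime. -/
def IsSBLmeshCD {N : ℕ} (κ : ℝ) (p : ℕ) (ε₁ : ℝ) (m : Mesh N) : Prop :=
  ((1 : ℝ) / 2 ≤ κ * p * ε₁ ∧ N = 1) ∨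
    (κ * p * ε₁ ≤ 1 / 2 ∧ N = 2 ∧ m.pt 1 = 1 - κ * p * ε₁)

/-! Since `log Γ` is convex and has slope `log t` on `[t, t + 1]`, its derivative at `t + 1` is at
least `log t`, the derivative of `t log t - t`. Hence `Γ(t + 1) / (t / e)^t` is nondecreasing, and

  `Γ(x + 1) / Γ(y + 1) ≤ (x^x / y^y) e^(y - x)`  for `0 ≤ x ≤ y`.

At `x = (1 - λ) n` and `y = (1 + λ) n` the right-hand side is an exact `n`-th power, with base
`(1 - λ)^(1 - λ) / (1 + λ)^(1 + λ) * (e / n)^(2 λ)`. The weight `b^(2 λ n)` with `b ≤ a n` cancels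
the `n` in this base and leaves the rate `q` with `2 κ K e` replaced by `a e`. In the seminorm
estimate, the one further factor `K M ≤ 2 κ K p` is absorbed by the prefactor `1 / (2 p + 1)`. -/

theorem differentiableAt_log_Gamma {t : ℝ} (ht : 0 < t) :
    DifferentiableAt ℝ (Real.log ∘ Real.Gamma) t :=
  (Real.differentiableAt_Gamma fun m => by
    have : (0 : ℝ) ≤ m := m.cast_nonneg
    linarith).log (Real.Gamma_pos_of_pos ht).ne'

theorem log_le_deriv_log_Gamma_add_one {t : ℝ} (ht : 0 < t) :
    Real.log t ≤ deriv (Real.log ∘ Real.Gamma) (t + 1) := by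
  have ht' : 0 < t + 1 := by linarith
  have slope_eq : slope (Real.log ∘ Real.Gamma) t (t + 1) = Real.log t := by
    simp only [slope_def_field, Function.comp_apply, add_sub_cancel_left, div_one]
    rw [Real.Gamma_add_one ht.ne', Real.log_mul ht.ne' (Real.Gamma_pos_of_pos ht).ne',
      add_sub_cancel_right]
  rw [← slope_eq]
  exact Real.convexOn_log_Gamma.slope_le_deriv ht ht' (lt_add_one t)
    (differentiableAt_log_Gamma ht')

theorem monotoneOn_log_Gamma_add_one_sub_mul_log_sub_self :
    MonotoneOn (fun t => Real.log (Real.Gamma (t + 1)) - (t * Real.log t - t)) (Ici 0) := by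
  have hderiv : ∀ t ∈ interior (Ici (0 : ℝ)),
      HasDerivAt (fun t => Real.log (Real.Gamma (t + 1)) - (t * Real.log t - t))
        (deriv (Real.log ∘ Real.Gamma) (t + 1) - Real.log t) t := by
    intro t ht
    rw [interior_Ici, mem_Ioi] at ht
    have h := ((differentiableAt_log_Gamma (by linarith)).hasDerivAt.comp_add_const t 1).sub
      ((Real.hasDerivAt_mul_log ht.ne').sub (hasDerivAt_id t))
    rwa [add_sub_cancel_right] at h
  have hcont : ContinuousOn
      (fun t => Real.log (Real.Gamma (t + 1)) - (t * Real.log t - t)) (Ici 0) := by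
    refine ContinuousOn.sub (fun t ht => ?_)
      (Real.continuous_mul_log.sub continuous_id).continuousOn
    have ht' : 0 < t + 1 := by linarith [mem_Ici.1 ht]
    exact ((differentiableAt_log_Gamma ht').hasDerivAt.comp_add_const t 1).continuousAt
      |>.continuousWithinAt
  refine monotoneOn_of_hasDerivWithinAt_nonneg (convex_Ici 0) hcont
    (fun t ht => (hderiv t ht).hasDerivWithinAt) fun t ht => ?_
  rw [interior_Ici] at ht
  exact sub_nonneg.2 (log_le_deriv_log_Gamma_add_one ht)

theorem rpow_self_eq_exp_mul_log {x : ℝ} (hx : 0 ≤ x) : x ^ x = Real.exp (x * Real.log x) := by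
  rcases hx.eq_or_lt with rfl | hx
  · simp
  · rw [Real.rpow_def_of_pos hx, mul_comm]

theorem rpow_self_pos {x : ℝ} (hx : 0 ≤ x) : 0 < x ^ x :=
  rpow_self_eq_exp_mul_log hx ▸ Real.exp_pos _

theorem mul_rpow_mul_self {x n : ℝ} (hx : 0 ≤ x) (hn : 0 ≤ n) :
    (x * n) ^ (x * n) = (x ^ x * n ^ x) ^ n := by
  rw [Real.rpow_mul (mul_nonneg hx hn), Real.mul_rpow hx hn]

theorem Gamma_add_one_div_Gamma_add_one_le {x y : ℝ} (hx : 0 ≤ x) (hxy : x ≤ y) :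
    Real.Gamma (x + 1) / Real.Gamma (y + 1) ≤ x ^ x / y ^ y * Real.exp (y - x) := by
  have hy : 0 ≤ y := hx.trans hxy
  have hΓx : 0 < Real.Gamma (x + 1) := Real.Gamma_pos_of_pos (by linarith)
  have hΓy : 0 < Real.Gamma (y + 1) := Real.Gamma_pos_of_pos (by linarith)
  have hmono := monotoneOn_log_Gamma_add_one_sub_mul_log_sub_self hx hy hxy
  rw [rpow_self_eq_exp_mul_log hx, rpow_self_eq_exp_mul_log hy, ← Real.exp_sub, ← Real.exp_add,
    ← Real.log_le_iff_le_exp (div_pos hΓx hΓy), Real.log_div hΓx.ne' hΓy.ne']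
  linarith

/-- The quotient `(n - s)! / (n + s)!` for real `n` and `s`, with `x!` read as `Γ(x + 1)`. -/
def factorialRatio (n s : ℝ) : ℝ := Real.Gamma (n - s + 1) / Real.Gamma (n + s + 1)

/-- The base `q` of the exponential convergence rate, as a function of `λ` and `a = 2 κ K e`. -/
def geometricRate (lam a : ℝ) : ℝ :=
  (1 - lam) ^ (1 - lam) / (1 + lam) ^ (1 + lam) * a ^ (2 * lam)

theorem factorialRatio_nonneg {n s : ℝ} (hs : |s| ≤ n) : 0 ≤ factorialRatio n s := by
  obtain ⟨hlower, hupper⟩ := abs_le.1 hs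
  exact div_nonneg (Real.Gamma_nonneg_of_nonneg (by linarith))
    (Real.Gamma_nonneg_of_nonneg (by linarith))

section Rate

variable {lam : ℝ}

theorem geometricRate_pos (hlam : |lam| ≤ 1) {a : ℝ} (ha : 0 < a) : 0 < geometricRate lam a := by
  obtain ⟨hlower, hupper⟩ := abs_le.1 hlam
  exact mul_pos (div_pos (rpow_self_pos (by linarith)) (rpow_self_pos (by linarith)))
    (Real.rpow_pos_of_pos ha _)

theorem geometricRate_lt_one (hlam : lam ∈ Ioc (0 : ℝ) 1) {a : ℝ} (ha : 0 ≤ a) (ha1 : a ≤ 1) :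
    geometricRate lam a < 1 := by
  obtain ⟨h0, h1⟩ := hlam
  have hnum : (1 - lam) ^ (1 - lam) ≤ 1 :=
    Real.rpow_le_one (by linarith) (by linarith) (by linarith)
  have hden : 1 < (1 + lam) ^ (1 + lam) := Real.one_lt_rpow (by linarith) (by linarith)
  have hquot : (1 - lam) ^ (1 - lam) / (1 + lam) ^ (1 + lam) < 1 :=
    (div_lt_one (by linarith)).2 (hnum.trans_lt hden)
  have hquot0 : 0 ≤ (1 - lam) ^ (1 - lam) / (1 + lam) ^ (1 + lam) :=
    div_nonneg (rpow_self_pos (by linarith)).le (by linarith)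
  have hpow : a ^ (2 * lam) ≤ 1 := Real.rpow_le_one ha ha1 (by linarith)
  exact (mul_le_of_le_one_right hquot0 hpow).trans_lt hquot

theorem geometricRate_mul {a b : ℝ} (ha : 0 ≤ a) (hb : 0 ≤ b) :
    geometricRate lam (a * b) = geometricRate lam a * b ^ (2 * lam) := by
  rw [geometricRate, geometricRate, Real.mul_rpow ha hb, mul_assoc]

theorem rpow_self_quotient_mul_exp_eq_geometricRate_rpow (hlam : |lam| ≤ 1) {n : ℝ} (hn : 0 < n) :
    ((1 - lam) * n) ^ ((1 - lam) * n) / ((1 + lam) * n) ^ ((1 + lam) * n)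
        * Real.exp (2 * lam * n)
      = geometricRate lam (Real.exp 1 / n) ^ n := by
  obtain ⟨hlower, hupper⟩ := abs_le.1 hlam
  have hminus : 0 ≤ 1 - lam := by linarith
  have hplus : 0 ≤ 1 + lam := by linarith
  have hplus_pos : 0 < (1 + lam) ^ (1 + lam) := rpow_self_pos hplus
  have hsplit : n ^ (1 + lam) = n ^ (1 - lam) * n ^ (2 * lam) := by
    rw [← Real.rpow_add hn]
    ring_nf
  have hexp : Real.exp (2 * lam * n) = (Real.exp 1 ^ (2 * lam)) ^ n := by
    rw [Real.exp_one_rpow, ← Real.exp_mul]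
  rw [mul_rpow_mul_self hminus hn.le, mul_rpow_mul_self hplus hn.le, hexp,
    ← Real.div_rpow (by positivity) (by positivity),
    ← Real.mul_rpow (by positivity) (by positivity), geometricRate,
    Real.div_rpow (Real.exp_pos 1).le hn.le, hsplit]
  congr 1
  field_simp

theorem factorialRatio_le_geometricRate_rpow (hlam : lam ∈ Icc (0 : ℝ) 1) {n : ℝ} (hn : 0 < n) :
    factorialRatio n (lam * n) ≤ geometricRate lam (Real.exp 1 / n) ^ n := by
  obtain ⟨h0, h1⟩ := hlam
  have hΓ := Gamma_add_one_div_Gamma_add_one_le (x := (1 - lam) * n) (y := (1 + lam) * n)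
    (mul_nonneg (by linarith) hn.le) (by gcongr; linarith)
  rw [show (1 + lam) * n - (1 - lam) * n = 2 * lam * n by ring,
    rpow_self_quotient_mul_exp_eq_geometricRate_rpow (abs_le.2 ⟨by linarith, h1⟩) hn] at hΓ
  rwa [factorialRatio, show n - lam * n = (1 - lam) * n by ring,
    show n + lam * n = (1 + lam) * n by ring]

theorem factorialRatio_mul_rpow_le (hlam : lam ∈ Icc (0 : ℝ) 1) {n a b : ℝ} (hn : 0 < n)
    (hb : 0 ≤ b) (hba : b ≤ a * n) :
    factorialRatio n (lam * n) * b ^ (2 * (lam * n)) ≤ geometricRate lam (a * Real.exp 1) ^ n := by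
  have h0 := hlam.1
  have han : 0 ≤ a * n := hb.trans hba
  have hen : 0 < Real.exp 1 / n := by positivity
  have hrate : 0 < geometricRate lam (Real.exp 1 / n) :=
    geometricRate_pos (abs_le.2 ⟨by linarith, hlam.2⟩) hen
  calc factorialRatio n (lam * n) * b ^ (2 * (lam * n))
      ≤ geometricRate lam (Real.exp 1 / n) ^ n * (a * n) ^ (2 * (lam * n)) := by
        gcongr
        exact factorialRatio_le_geometricRate_rpow hlam hn
    _ = (geometricRate lam (Real.exp 1 / n) * (a * n) ^ (2 * lam)) ^ n := by
        rw [Real.mul_rpow hrate.le (by positivity), ← Real.rpow_mul han, mul_assoc]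
    _ = geometricRate lam (a * Real.exp 1) ^ n := by
        rw [← geometricRate_mul hen.le han]
        congr 2
        field_simp

theorem factorialRatio_mul_le_of_le_mul_rpow (hlam : lam ∈ Icc (0 : ℝ) 1)
    {p a b C J : ℝ} (hp : 0 ≤ p) (ha : 0 ≤ a) (hb : 0 ≤ b) (hba : b ≤ a * p) (hC : 0 ≤ C)
    (hJ : J ≤ C * b ^ (2 * (lam * (p + 1)) + 1)) :
    1 / (2 * p + 1) * factorialRatio (p + 1) (lam * (p + 1)) * J
      ≤ C * a * geometricRate lam (a * Real.exp 1) ^ (p + 1) := by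
  have h0 := hlam.1
  have hs : |lam * (p + 1)| ≤ p + 1 := by
    rw [abs_of_nonneg (by positivity)]
    exact mul_le_of_le_one_left (by positivity) hlam.2
  have hratio := factorialRatio_nonneg hs
  have hweighted : factorialRatio (p + 1) (lam * (p + 1)) * b ^ (2 * (lam * (p + 1)))
      ≤ geometricRate lam (a * Real.exp 1) ^ (p + 1) :=
    factorialRatio_mul_rpow_le hlam (by positivity) hb (by linarith)
  have habsorb : b / (2 * p + 1) ≤ a := by
    rw [div_le_iff₀ (by positivity)]
    nlinarith
  calc 1 / (2 * p + 1) * factorialRatio (p + 1) (lam * (p + 1)) * J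
      ≤ 1 / (2 * p + 1) * factorialRatio (p + 1) (lam * (p + 1))
          * (C * b ^ (2 * (lam * (p + 1)) + 1)) := by gcongr
    _ = C * (b / (2 * p + 1))
          * (factorialRatio (p + 1) (lam * (p + 1)) * b ^ (2 * (lam * (p + 1)))) := by
        rw [Real.rpow_add_one' hb (by positivity)]
        ring
    _ ≤ C * a * geometricRate lam (a * Real.exp 1) ^ (p + 1) := by gcongr

end Rate

theorem exp_neg_abs_log_mul {q : ℝ} (hq : q ∈ Ioc (0 : ℝ) 1) (x : ℝ) :
    Real.exp (-|Real.log q| * x) = q ^ x := by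
  rw [abs_of_nonpos (Real.log_nonpos hq.1.le hq.2), neg_neg, Real.rpow_def_of_pos hq.1]

/-- The quantitative Case-1 estimate: with `λ ∈ (0,1)`, `K, κ > 0`,
`2κKe ≤ 1` and `q = ((1−λ)^{1−λ}/(1+λ)^{1+λ})(2κKe)^{2λ}`, one has `q ∈ (0,1)`;
with `s = λ(p+1)` (factorials read via the Gamma function),
`(p+1−s)!/(p+1+s)! · (K·2κp)^{2s} ≤ C q^{p+1}`; and consequently, whenever
`|u'|²_{s,I} ≤ C₁ K^{2s+1} M^{2s+1}` with `M ≤ 2κp`, it follows that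
`(1/(2p+1)) (p+1−s)!/(p+1+s)! |u'|²_{s,I} ≤ C' e^{−βp}` with `β = |ln q|`. -/
theorem statement13 (lam K κ : ℝ) (hlam : lam ∈ Set.Ioo (0 : ℝ) 1)
    (hK : 0 < K) (hκ : 0 < κ) (hsmall : 2 * κ * K * Real.exp 1 ≤ 1) :
    ((1 - lam) ^ (1 - lam) / (1 + lam) ^ (1 + lam) * (2 * κ * K * Real.exp 1) ^ (2 * lam)
        ∈ Set.Ioo (0 : ℝ) 1) ∧
      (∃ C : ℝ, 0 < C ∧ ∀ p : ℕ, 1 ≤ p →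
        Real.Gamma ((p : ℝ) + 1 - lam * ((p : ℝ) + 1) + 1)
            / Real.Gamma ((p : ℝ) + 1 + lam * ((p : ℝ) + 1) + 1)
            * (K * (2 * κ * p)) ^ (2 * (lam * ((p : ℝ) + 1)))
          ≤ C * ((1 - lam) ^ (1 - lam) / (1 + lam) ^ (1 + lam)
              * (2 * κ * K * Real.exp 1) ^ (2 * lam)) ^ (p + 1 : ℕ)) ∧
      (∀ C₁ : ℝ, 0 < C₁ → ∃ C' : ℝ, 0 < C' ∧ ∀ p : ℕ, 1 ≤ p → ∀ M J : ℝ,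
        0 < M → M ≤ 2 * κ * p → 0 ≤ J →
        J ≤ C₁ * K ^ (2 * (lam * ((p : ℝ) + 1)) + 1) * M ^ (2 * (lam * ((p : ℝ) + 1)) + 1) →
        1 / (2 * (p : ℝ) + 1)
            * (Real.Gamma ((p : ℝ) + 1 - lam * ((p : ℝ) + 1) + 1)
              / Real.Gamma ((p : ℝ) + 1 + lam * ((p : ℝ) + 1) + 1)) * J
          ≤ C' * Real.exp (-|Real.log ((1 - lam) ^ (1 - lam) / (1 + lam) ^ (1 + lam)
              * (2 * κ * K * Real.exp 1) ^ (2 * lam))| * p)) := by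
  have hq0 : 0 < geometricRate lam (2 * κ * K * Real.exp 1) :=
    geometricRate_pos (abs_le.2 ⟨by linarith [hlam.1], hlam.2.le⟩) (by positivity)
  have hq1 : geometricRate lam (2 * κ * K * Real.exp 1) < 1 :=
    geometricRate_lt_one ⟨hlam.1, hlam.2.le⟩ (by positivity) hsmall
  refine ⟨⟨hq0, hq1⟩, ⟨1, one_pos, fun p _ => ?_⟩, fun C₁ hC₁ =>
    ⟨C₁ * (2 * κ * K), by positivity, fun p _ M J hM hMp _ hJ => ?_⟩⟩
  · have hbase : K * (2 * κ * p) ≤ 2 * κ * K * ((p : ℝ) + 1) := by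
      nlinarith [mul_pos hκ hK]
    have hbound := factorialRatio_mul_rpow_le (Ioo_subset_Icc_self hlam) (by positivity)
      (by positivity) hbase
    rw [one_mul, ← Real.rpow_natCast, Nat.cast_add_one]
    exact hbound
  · have hbase : K * M ≤ 2 * κ * K * p :=
      (mul_le_mul_of_nonneg_left hMp hK.le).trans_eq (by ring)
    rw [mul_assoc C₁, ← Real.mul_rpow hK.le hM.le] at hJ
    have hbound := factorialRatio_mul_le_of_le_mul_rpow (Ioo_subset_Icc_self hlam) p.cast_nonneg
      (by positivity) (by positivity) hbase hC₁.le hJ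
    refine hbound.trans (mul_le_mul_of_nonneg_left ?_ (by positivity))
    exact (Real.rpow_le_rpow_of_exponent_ge hq0 hq1.le (by linarith)).trans_eq
      (exp_neg_abs_log_mul ⟨hq0, hq1.le⟩ p).symm
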